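/- Let Ψ : ℝⁿ ⇉ ℝᵐ be locally bounded at x ∈ ℝⁿ with (cl Ψ)(x) nonempty. Then cocl Ψ is upper semicontinuous at x: (cocl Ψ)(x) is closed, and for every open set V ⊇ (cocl Ψ)(x) the set {x' | (cocl Ψ)(x') ⊆ V} is a neighborhood of x. -/

import Mathlib

open Filter Topology Set

noncomputable def clMap {n m : ℕ} (Ψ : EuclideanSpace ℝ (Fin n) → Set (EuclideanSpace ℝ (Fin m)))
    (x : EuclideanSpace ℝ (Fin n)) : Set (EuclideanSpace ℝ (Fin m)) :=
  {y | (x, y) ∈ closure {p : EuclideanSpace ℝ (Fin n) × EuclideanSpace ℝ (Fin m) | p.2 ∈ Ψ p.1}}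

noncomputable def coclMap {n m : ℕ} (Ψ : EuclideanSpace ℝ (Fin n) → Set (EuclideanSpace ℝ (Fin m)))
    (x : EuclideanSpace ℝ (Fin n)) : Set (EuclideanSpace ℝ (Fin m)) :=
  convexHull ℝ (clMap Ψ x)

def LocBddAt {n m : ℕ} (Ψ : EuclideanSpace ℝ (Fin n) → Set (EuclideanSpace ℝ (Fin m)))
    (xb : EuclideanSpace ℝ (Fin n)) : Prop :=
  ∃ U ∈ 𝓝 xb, ∃ M : ℝ, 0 ≤ M ∧ ∀ x ∈ U, ∀ y ∈ Ψ x, ‖y‖ ≤ M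

theorem isCompact_convexHull_aux {m : ℕ} {s : Set (EuclideanSpace ℝ (Fin m))} (hs : IsCompact s) :
    IsCompact (convexHull ℝ s) := by
  have key : convexHull ℝ s = ⋃ k ∈ Set.Iic (m + 1),
      (fun p : (Fin k → ℝ) × (Fin k → EuclideanSpace ℝ (Fin m)) => ∑ i, p.1 i • p.2 i) ''
        (stdSimplex ℝ (Fin k) ×ˢ Set.pi Set.univ (fun _ => s)) := by
    apply Set.Subset.antisymm
    · intro y hy
      obtain ⟨ι, hι, z, w, hz, hind, hw, hw1, hsum⟩ := eq_pos_convex_span_of_mem_convexHull hy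
      have hcard : Fintype.card ι ≤ m + 1 := by
        have h1 := hind.card_le_finrank_succ
        have h2 := Submodule.finrank_le (vectorSpan ℝ (Set.range z))
        rw [finrank_euclideanSpace_fin] at h2
        omega
      simp only [Set.mem_iUnion]
      let e := (Fintype.equivFin ι).symm
      refine ⟨Fintype.card ι, hcard, (fun i => w (e i), fun i => z (e i)), ⟨⟨?_, ?_⟩, ?_⟩, ?_⟩
      · intro i
        exact (hw _).le
      · rw [← hw1]
        exact e.sum_comp w
      · intro i _
        exact hz (Set.mem_range_self _)
      · rw [← hsum]
        exact e.sum_comp (fun i => w i • z i)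
    · intro y hy
      simp only [Set.mem_iUnion] at hy
      obtain ⟨k, _, p, ⟨⟨h0, h1⟩, h2⟩, rfl⟩ := hy
      exact (convex_convexHull ℝ s).sum_mem (fun i _ => h0 i) h1
        (fun i _ => subset_convexHull ℝ s (h2 i (Set.mem_univ i)))
  rw [key]
  refine (Set.finite_Iic _).isCompact_biUnion fun k _ => ?_
  refine ((isCompact_stdSimplex ℝ (Fin k)).prod (isCompact_univ_pi fun _ => hs)).image ?_
  fun_prop

/-- If `Ψ` is locally bounded at `x` and `(cl Ψ)(x)` is nonempty, then `cocl Ψ` is upper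
semicontinuous at `x`: `(cocl Ψ)(x)` is closed and for every open `V ⊇ (cocl Ψ)(x)`,
the set `{x' | (cocl Ψ)(x') ⊆ V}` is a neighborhood of `x`. -/
theorem cocl_upperSemicontinuous {n m : ℕ}
    (Ψ : EuclideanSpace ℝ (Fin n) → Set (EuclideanSpace ℝ (Fin m)))
    (x : EuclideanSpace ℝ (Fin n)) (h : LocBddAt Ψ x) (hne : (clMap Ψ x).Nonempty) :
    IsClosed (coclMap Ψ x) ∧
    ∀ V : Set (EuclideanSpace ℝ (Fin m)), IsOpen V → coclMap Ψ x ⊆ V →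
      {x' | coclMap Ψ x' ⊆ V} ∈ 𝓝 x := by
  obtain ⟨U, hU, M, hM, hb⟩ := h
  have hbd : ∀ x' ∈ interior U, clMap Ψ x' ⊆ Metric.closedBall 0 M := by
    intro x' hx' y hy
    by_contra hc
    have hopen : IsOpen (interior U ×ˢ
        (Metric.closedBall (0 : EuclideanSpace ℝ (Fin m)) M)ᶜ) :=
      isOpen_interior.prod Metric.isClosed_closedBall.isOpen_compl
    obtain ⟨p, ⟨hp1, hp2⟩, hp3⟩ := mem_closure_iff.1 hy _ hopen ⟨hx', hc⟩
    apply hp2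
    rw [mem_closedBall_zero_iff]
    exact hb _ (interior_subset hp1) _ hp3
  have hcl : IsClosed (clMap Ψ x) := isClosed_closure.preimage (Continuous.prodMk_right x)
  have hxU : x ∈ interior U := mem_interior_iff_mem_nhds.2 hU
  have hc : IsCompact (clMap Ψ x) :=
    (isCompact_closedBall _ _).of_isClosed_subset hcl (hbd x hxU)
  have hK : IsCompact (coclMap Ψ x) := isCompact_convexHull_aux hc
  refine ⟨hK.isClosed, fun V hV hKV => ?_⟩
  obtain ⟨δ, hδ, hδV⟩ := hK.exists_thickening_subset_open hV hKV
  have hC : IsCompact (Metric.closedBall (0 : EuclideanSpace ℝ (Fin m)) M \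
      Metric.thickening δ (coclMap Ψ x)) :=
    (isCompact_closedBall _ _).diff Metric.isOpen_thickening
  obtain ⟨A, B, hA, hB, hxA, hCB, hAB⟩ := generalized_tube_lemma
    (isCompact_singleton (x := x)) hC
    (isClosed_closure (s := {p : EuclideanSpace ℝ (Fin n) × EuclideanSpace ℝ (Fin m) |
      p.2 ∈ Ψ p.1})).isOpen_compl (by
      rintro ⟨a, b⟩ ⟨ha, hb1, hb2⟩ hmem
      obtain rfl : a = x := ha
      exact hb2 (Metric.self_subset_thickening hδ _ (subset_convexHull ℝ _ hmem)))
  filter_upwards [isOpen_interior.mem_nhds hxU, hA.mem_nhds (hxA rfl)] with x' h1 h2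
  refine (convexHull_min ?_ ((convex_convexHull ℝ _).thickening δ)).trans hδV
  intro y hy
  by_contra hny
  exact hAB (Set.mk_mem_prod h2 (hCB ⟨hbd x' h1 hy, hny⟩)) hy
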